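/- Let k be a field of characteristic 0 and n = 5. The k-vector space R_{(1,1,1,1,1)} is zero, while the k-vector space R_{(2,2,2,2,2)} of SL₂(k)-invariant multihomogeneous polynomials of multidegree (2,2,2,2,2) has dimension 6. (The degree 2 invariants give the embedding of the GIT quotient of five points on ℙ¹, the quintic del Pezzo surface, into ℙ⁵.) -/

import Mathlib

/-!
In multidegree `v`, invariance under `diag(2, 1/2)` forces each monomial of an invariant to contain
as many `x`'s as `y`'s (`Rv_balanced`). For `v = (1,1,1,1,1)` the total degree is odd, so there are
no invariants.

For `v = (2,2,2,2,2)` the points are numbered `0, …, 4`, and an invariant `f` is viewed as a function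
of five vectors. Put `P_0 = (1,0)`, `P_1 = (0,1)`, `P_2 = (1,1)`. Moving three general points to
`P_0, P_1, P_2` by `GL₂(k)` and rescaling shows that `f` is determined by the function
`(q, r) ↦ f(P_0, P_1, P_2, q, r)` (`eq_zero_of_eval_config`). This function is a quadratic form in
each of `q` and `r`, so it is determined by its nine values at `q = P_i`, `r = P_j`
(`eval_config_eq_zero`). The three values with `i = j` vanish, because an invariant vanishes whenever
three of the five points coincide (`eval_config_diag`). Hence evaluation at the six remaining pairs
is injective. It is also surjective: for each ordered pair `i ≠ j`, with `l` the third index, the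
pentagon `[3 j][3 l][4 i][4 l][i j]` is an invariant which is nonzero at the pair `(i, j)` and
vanishes at the five others (`eval_pentagon_eq_zero_iff`).

Geometrically, this is the quintic del Pezzo surface as the blow-up of `ℙ¹ × ℙ¹` at three points of
the diagonal, anticanonically embedded by the forms of bidegree `(2,2)` through these points.
-/

open MvPolynomial

/-- The polynomial ring `A = k[x_1, y_1, …, x_n, y_n]`: variable `(i, 0)` is `x_i`
and `(i, 1)` is `y_i`. -/
abbrev PtRing (k : Type) [CommRing k] (n : ℕ) := MvPolynomial (Fin n × Fin 2) k

/-- The bracket `[ab] = x_a y_b − x_b y_a`. -/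
noncomputable def bracket (k : Type) [CommRing k] (n : ℕ) (a b : Fin n) : PtRing k n :=
  X (a, 0) * X (b, 1) - X (b, 0) * X (a, 1)

/-- The graph monomial `m_Γ = ∏_{(a,b) ∈ Γ} [ab]` of a directed graph `Γ`,
viewed as a multiset of directed edges. -/
noncomputable def graphMonomial (k : Type) [CommRing k] (n : ℕ)
    (Γ : Multiset (Fin n × Fin n)) : PtRing k n :=
  (Γ.map fun e => bracket k n e.1 e.2).prod

/-- The `k`-algebra endomorphism of `A` induced by a `2×2` matrix `g = ((p,q),(r,s))`:
`x_i ↦ p·x_i + r·y_i` and `y_i ↦ q·x_i + s·y_i`. -/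
noncomputable def subst (k : Type) [CommRing k] (n : ℕ) (g : Matrix (Fin 2) (Fin 2) k) :
    PtRing k n →ₐ[k] PtRing k n :=
  aeval fun p =>
    if p.2 = 0 then C (g 0 0) * X (p.1, 0) + C (g 1 0) * X (p.1, 1)
    else C (g 0 1) * X (p.1, 0) + C (g 1 1) * X (p.1, 1)

/-- The valence vector of a directed graph: the `i`-th entry is the number of edges
(with multiplicity) having `i` as an endpoint. -/
def valence (n : ℕ) (Γ : Multiset (Fin n × Fin n)) : Fin n → ℕ :=
  fun i => (Γ.map Prod.fst).count i + (Γ.map Prod.snd).count i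

/-- `R_v`: the space of `SL₂(k)`-invariant multihomogeneous polynomials of multidegree `v`. -/
noncomputable def Rv (k : Type) [CommRing k] (n : ℕ) (v : Fin n → ℕ) :
    Submodule k (PtRing k n) :=
  (⨅ g : Matrix.SpecialLinearGroup (Fin 2) k,
      LinearMap.ker ((subst k n (g : Matrix (Fin 2) (Fin 2) k)).toLinearMap
        - (LinearMap.id : PtRing k n →ₗ[k] PtRing k n))) ⊓
  weightedHomogeneousSubmodule k (fun p : Fin n × Fin 2 => Finsupp.single p.1 1)
    (Finsupp.equivFunOnFinite.symm v)

/-! ### Configurations of points -/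

/-- The base points `P_0 = (1,0)`, `P_1 = (0,1)`, `P_2 = (1,1)`, representing `∞`, `0`, `1` on the
projective line. -/
def basePt (k : Type) [Field k] : Fin 3 → Fin 2 → k := ![![1, 0], ![0, 1], ![1, 1]]

/-- The five-point configuration `(P_0, P_1, P_2, q, r)` on the affine cone. -/
def config (k : Type) [Field k] (q r : Fin 2 → k) : Fin 5 × Fin 2 → k :=
  fun s => ![basePt k 0, basePt k 1, basePt k 2, q, r] s.1 s.2

/-- Right multiplication of each of the `n` row vectors by the matrix `g`. -/
def actPt {k : Type} [Field k] {n : ℕ} (g : Matrix (Fin 2) (Fin 2) k) (p : Fin n × Fin 2 → k) :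
    Fin n × Fin 2 → k :=
  fun s => p (s.1, 0) * g 0 s.2 + p (s.1, 1) * g 1 s.2

section
variable {k : Type} [Field k]

lemma eval_subst {n : ℕ} (g : Matrix (Fin 2) (Fin 2) k) (p : Fin n × Fin 2 → k)
    (f : PtRing k n) : eval p (subst k n g f) = eval (actPt g p) f := by
  induction f using MvPolynomial.induction_on with
  | C a => simp [subst]
  | add f g hf hg => simp [hf, hg]
  | mul_X f s hf =>
    rw [map_mul, map_mul, hf, map_mul]
    congr 1
    obtain ⟨i, j⟩ := s
    fin_cases j <;> simp [subst, actPt] <;> ring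

/-! ### Monomials of an invariant -/

lemma coeff_scale {σ : Type} (c : σ → k) (f : MvPolynomial σ k) (d : σ →₀ ℕ) :
    coeff d (aeval (fun s => C (c s) * X s : σ → MvPolynomial σ k) f)
      = (d.prod fun s m => c s ^ m) * coeff d f := by
  classical
  induction f using MvPolynomial.induction_on' with
  | monomial u a =>
    have : aeval (fun s => C (c s) * X s : σ → MvPolynomial σ k) (monomial u a)
        = C (u.prod fun s m => c s ^ m) * monomial u a := by
      rw [aeval_monomial, monomial_eq]
      simp only [Finsupp.prod, mul_pow, Finset.prod_mul_distrib, map_prod, map_pow,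
        MvPolynomial.algebraMap_eq]
      ring
    rw [this, coeff_C_mul, coeff_monomial]
    split_ifs with h
    · rw [h]
    · simp
  | add p q hp hq => simp only [map_add, coeff_add, hp, hq]; ring

lemma Rv_invariant {n : ℕ} {v : Fin n → ℕ} {f : PtRing k n} (hf : f ∈ Rv k n v)
    (g : Matrix (Fin 2) (Fin 2) k) (hg : g.det = 1) : subst k n g f = f := by
  have h := (Submodule.mem_iInf _).1 (Submodule.mem_inf.1 hf).1 ⟨g, hg⟩
  rw [LinearMap.mem_ker, LinearMap.sub_apply, sub_eq_zero] at h
  exact h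

lemma Rv_multidegree {n : ℕ} {v : Fin n → ℕ} {f : PtRing k n} (hf : f ∈ Rv k n v)
    {d : Fin n × Fin 2 →₀ ℕ} (hd : coeff d f ≠ 0) (i : Fin n) : d (i, 0) + d (i, 1) = v i := by
  have h := (mem_weightedHomogeneousSubmodule k _ _ _).1 (Submodule.mem_inf.1 hf).2 hd
  have h' := DFunLike.congr_fun h i
  rw [Finsupp.weight_apply, Finsupp.sum_fintype _ _ (by simp)] at h'
  simpa [Fintype.sum_prod_type, Finsupp.single_apply, Finset.sum_add_distrib] using h'

/-- Invariance under `diag(2, 1/2)` forces every monomial to have as many `x`'s as `y`'s. -/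
lemma Rv_balanced [CharZero k] {n : ℕ} {v : Fin n → ℕ} {f : PtRing k n} (hf : f ∈ Rv k n v)
    {d : Fin n × Fin 2 →₀ ℕ} (hd : coeff d f ≠ 0) : ∑ i, d (i, 0) = ∑ i, d (i, 1) := by
  have h := Rv_invariant hf !![2, 0; 0, 2⁻¹] (by simp [Matrix.det_fin_two])
  have h2 : subst k n !![2, 0; 0, 2⁻¹]
      = aeval (fun s => C (if s.2 = 0 then 2 else 2⁻¹) * X s) := by
    unfold subst
    congr 1
    funext ⟨i, j⟩
    fin_cases j <;> simp
  rw [h2] at h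
  have h3 := coeff_scale (fun s : Fin n × Fin 2 => if s.2 = 0 then (2 : k) else 2⁻¹) f d
  rw [h] at h3
  have h4 : (d.prod fun s m => (if s.2 = 0 then (2 : k) else 2⁻¹) ^ m) = 1 :=
    (mul_eq_right₀ hd).1 h3.symm
  rw [Finsupp.prod_fintype _ _ (by simp), Fintype.prod_prod_type] at h4
  simp only [Fin.prod_univ_two, Finset.prod_mul_distrib, if_true, one_ne_zero, if_false,
    Finset.prod_pow_eq_pow_sum, inv_pow, Finset.prod_inv_distrib] at h4
  have h5 : (2 : k) ^ (∑ i, d (i, 0)) = 2 ^ (∑ i, d (i, 1)) :=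
    (mul_inv_eq_one₀ (pow_ne_zero _ two_ne_zero)).1 h4
  have h6 : 2 ^ (∑ i, d (i, 0)) = 2 ^ (∑ i, d (i, 1)) := by exact_mod_cast h5
  exact Nat.pow_right_injective le_rfl h6

lemma Rv_one_eq_bot [CharZero k] : Rv k 5 (fun _ => 1) = ⊥ := by
  rw [eq_bot_iff]
  intro f hf
  rw [Submodule.mem_bot]
  ext d
  by_contra hd
  have h1 := Rv_balanced hf hd
  have h2 := Rv_multidegree hf hd
  have h3 : ∑ i, (d (i, 0) + d (i, 1)) = ∑ _i : Fin 5, 1 := Finset.sum_congr rfl fun i _ => h2 i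
  rw [Finset.sum_add_distrib] at h3
  simp only [Finset.sum_const, Finset.card_univ, Fintype.card_fin] at h3
  simp only [smul_eq_mul] at h3
  omega

lemma Rv_two_sum [CharZero k] {f : PtRing k 5} (hf : f ∈ Rv k 5 (fun _ => 2))
    {d : Fin 5 × Fin 2 →₀ ℕ} (hd : coeff d f ≠ 0) : ∑ i, d (i, 1) = 5 := by
  have h1 := Rv_balanced hf hd
  have h3 : ∑ i, (d (i, 0) + d (i, 1)) = ∑ _i : Fin 5, 2 :=
    Finset.sum_congr rfl fun i _ => Rv_multidegree hf hd i
  rw [Finset.sum_add_distrib] at h3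
  simp only [Finset.sum_const, Finset.card_univ, Fintype.card_fin, smul_eq_mul] at h3
  omega

/-! ### Behaviour under linear changes of coordinates -/

lemma eval_actPt_SL {f : PtRing k 5} {v : Fin 5 → ℕ} (hf : f ∈ Rv k 5 v)
    (g : Matrix (Fin 2) (Fin 2) k) (hg : g.det = 1) (p : Fin 5 × Fin 2 → k) :
    eval (actPt g p) f = eval p f := by
  rw [← eval_subst, Rv_invariant hf g hg]

/-- The `diag(1, s)`-equivariance, valid for every `s` since monomials are balanced. -/
lemma eval_scale_y [CharZero k] {f : PtRing k 5} (hf : f ∈ Rv k 5 (fun _ => 2))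
    (s : k) (p : Fin 5 × Fin 2 → k) :
    eval (actPt !![1, 0; 0, s] p) f = s ^ 5 * eval p f := by
  rw [eval_eq', eval_eq', Finset.mul_sum]
  refine Finset.sum_congr rfl fun d hd => ?_
  have h := Rv_two_sum hf (mem_support_iff.1 hd)
  have hs : s ^ 5 = ∏ i, s ^ d (i, 1) := by rw [Finset.prod_pow_eq_pow_sum, h]
  rw [hs, Fintype.prod_prod_type, Fintype.prod_prod_type]
  simp only [Fin.prod_univ_two, actPt, Finset.prod_mul_distrib]
  simp [mul_pow, Finset.prod_mul_distrib]
  ring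

/-- The zero locus of an invariant is stable under `GL₂(k)`, not only under `SL₂(k)`. -/
lemma eval_actPt_GL [CharZero k] {f : PtRing k 5} (hf : f ∈ Rv k 5 (fun _ => 2))
    (g : Matrix (Fin 2) (Fin 2) k) (hg : g.det ≠ 0) (p : Fin 5 × Fin 2 → k)
    (hp : eval p f = 0) : eval (actPt g p) f = 0 := by
  have hg' : g 0 0 * g 1 1 - g 0 1 * g 1 0 ≠ 0 := by rwa [Matrix.det_fin_two] at hg
  set δ := g 0 0 * g 1 1 - g 0 1 * g 1 0 with hδ
  have h1 : actPt g p
      = actPt !![g 0 0, g 0 1; δ⁻¹ * g 1 0, δ⁻¹ * g 1 1] (actPt !![1, 0; 0, δ] p) := by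
    funext ⟨i, j⟩
    fin_cases j <;> simp [actPt] <;> field_simp
  rw [h1, eval_actPt_SL hf, eval_scale_y hf, hp, mul_zero]
  rw [Matrix.det_fin_two]
  simp
  field_simp
  rw [hδ]

/-! ### Vanishing at triple points -/

/-- If three of the five points lie on the line `y = 0`, the invariant vanishes: a surviving monomial
would have degree at most four in the `y`'s, whereas it must have degree five. -/
lemma eval_eq_zero_of_triple [CharZero k] {f : PtRing k 5} (hf : f ∈ Rv k 5 (fun _ => 2))
    (p : Fin 5 × Fin 2 → k) (T : Finset (Fin 5)) (hT : T.card = 3) (hp : ∀ i ∈ T, p (i, 1) = 0) :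
    eval p f = 0 := by
  rw [eval_eq']
  refine Finset.sum_eq_zero fun d hd => ?_
  rw [mem_support_iff] at hd
  by_contra hne
  have hz : ∀ i ∈ T, d (i, 1) = 0 := by
    intro i hi
    by_contra hdi
    refine hne (mul_eq_zero_of_right _ (Finset.prod_eq_zero (Finset.mem_univ (i, 1)) ?_))
    rw [hp i hi, zero_pow hdi]
  have h1 := Rv_two_sum hf hd
  have h2 : ∑ i, d (i, 1) = ∑ i ∈ Tᶜ, d (i, 1) := by
    rw [← Finset.sum_compl_add_sum T, Finset.sum_eq_zero hz, add_zero]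
  have h3 : ∑ i ∈ Tᶜ, d (i, 1) ≤ ∑ i ∈ Tᶜ, 2 :=
    Finset.sum_le_sum fun i _ => by have := Rv_multidegree hf hd i; omega
  rw [Finset.sum_const, Finset.card_compl, hT] at h3
  simp at h3
  omega

/-- If points 3 and 4 both sit at the same base point, three points coincide, and an element of
`SL₂(k)` moves them to the line `y = 0`. -/
lemma eval_config_diag [CharZero k] {f : PtRing k 5} (hf : f ∈ Rv k 5 (fun _ => 2)) (j : Fin 3) :
    eval (config k (basePt k j) (basePt k j)) f = 0 := by
  fin_cases j
  · refine eval_eq_zero_of_triple hf _ {0, 3, 4} (by decide) ?_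
    simp [config, basePt]
  · rw [← eval_actPt_SL hf !![0, -1; 1, 0] (by simp [Matrix.det_fin_two])]
    refine eval_eq_zero_of_triple hf _ {1, 3, 4} (by decide) ?_
    simp [config, basePt, actPt]
  · rw [← eval_actPt_SL hf !![1, -1; 0, 1] (by simp [Matrix.det_fin_two])]
    refine eval_eq_zero_of_triple hf _ {2, 3, 4} (by decide) ?_
    simp [config, basePt, actPt]

/-! ### Reduction to nine values -/

/-- As a function of the `i`-th point alone, an element of `R_{(2,…,2)}` is a binary quadratic
form. -/
lemma eval_quadratic {f : PtRing k 5} (hf : f ∈ Rv k 5 (fun _ => 2)) (i : Fin 5)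
    (p : (Fin 2 → k) → Fin 5 × Fin 2 → k) (p₀ : Fin 5 × Fin 2 → k)
    (hp : ∀ q s, p q s = if s.1 = i then q s.2 else p₀ s) :
    ∃ a b c : k, ∀ q, eval (p q) f = a * q 0 ^ 2 + b * (q 0 * q 1) + c * q 1 ^ 2 := by
  have key : ∃ a b c : k, ∀ q, (∑ d ∈ f.support, fun q => coeff d f * ∏ s, p q s ^ d s) q
      = a * q 0 ^ 2 + b * (q 0 * q 1) + c * q 1 ^ 2 := by
    refine Finset.sum_induction (fun d q => coeff d f * ∏ s, p q s ^ d s)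
      (fun F => ∃ a b c : k, ∀ q, F q = a * q 0 ^ 2 + b * (q 0 * q 1) + c * q 1 ^ 2) ?_ ?_ ?_
    · rintro F G ⟨a, b, c, h⟩ ⟨a', b', c', h'⟩
      exact ⟨a + a', b + b', c + c', fun q => by rw [Pi.add_apply, h, h']; ring⟩
    · exact ⟨0, 0, 0, fun q => by simp⟩
    · intro d hd
      have h2 := Rv_multidegree hf (mem_support_iff.1 hd) i
      set m := coeff d f * ∏ j ∈ {i}ᶜ, (p₀ (j, 0) ^ d (j, 0) * p₀ (j, 1) ^ d (j, 1)) with hm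
      have h3 : ∀ q, coeff d f * ∏ s, p q s ^ d s = m * (q 0 ^ d (i, 0) * q 1 ^ d (i, 1)) := by
        intro q
        rw [Fintype.prod_prod_type, ← Finset.prod_compl_mul_prod {i}, hm, mul_assoc]
        congr 2
        · refine Finset.prod_congr rfl fun j hj => ?_
          have : j ≠ i := by simpa using hj
          simp [Fin.prod_univ_two, hp, this]
        · simp [Fin.prod_univ_two, hp]
      have h4 : d (i, 0) = 2 ∧ d (i, 1) = 0 ∨ d (i, 0) = 1 ∧ d (i, 1) = 1 ∨
          d (i, 0) = 0 ∧ d (i, 1) = 2 := by omega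
      rcases h4 with ⟨h, h'⟩ | ⟨h, h'⟩ | ⟨h, h'⟩
      · exact ⟨m, 0, 0, fun q => by simp only [h3]; rw [h, h']; ring⟩
      · exact ⟨0, m, 0, fun q => by simp only [h3]; rw [h, h']; ring⟩
      · exact ⟨0, 0, m, fun q => by simp only [h3]; rw [h, h']; ring⟩
  obtain ⟨a, b, c, h⟩ := key
  refine ⟨a, b, c, fun q => ?_⟩
  rw [← h q, eval_eq', Finset.sum_apply]

/-- A binary quadratic form vanishing at the three base points is zero. -/
lemma eval_eq_zero_of_basePt {f : PtRing k 5} (hf : f ∈ Rv k 5 (fun _ => 2)) (i : Fin 5)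
    (p : (Fin 2 → k) → Fin 5 × Fin 2 → k) (p₀ : Fin 5 × Fin 2 → k)
    (hp : ∀ q s, p q s = if s.1 = i then q s.2 else p₀ s)
    (h : ∀ j, eval (p (basePt k j)) f = 0) (q : Fin 2 → k) : eval (p q) f = 0 := by
  obtain ⟨a, b, c, habc⟩ := eval_quadratic hf i p p₀ hp
  have h0 := h 0
  have h1 := h 1
  have h2 := h 2
  rw [habc] at h0 h1 h2 ⊢
  simp [basePt] at h0 h1 h2
  subst h0 h1
  simp at h2
  simp [h2]

lemma eval_config_eq_zero {f : PtRing k 5} (hf : f ∈ Rv k 5 (fun _ => 2))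
    (h : ∀ i j, eval (config k (basePt k i) (basePt k j)) f = 0) (q r : Fin 2 → k) :
    eval (config k q r) f = 0 := by
  refine eval_eq_zero_of_basePt hf 3 (fun q => config k q r) (config k 0 r) ?_ (fun i => ?_) q
  · rintro q ⟨i, j⟩
    fin_cases i <;> simp [config]
  · refine eval_eq_zero_of_basePt hf 4 (fun r => config k (basePt k i) r)
      (config k (basePt k i) 0) ?_ (h i) r
    rintro q ⟨i, j⟩
    fin_cases i <;> simp [config]

/-- The multidegree gives equivariance under rescaling each point independently. -/
lemma eval_rescale {f : PtRing k 5} (hf : f ∈ Rv k 5 (fun _ => 2)) (c : Fin 5 → k)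
    (p : Fin 5 × Fin 2 → k) :
    eval (fun s => c s.1 * p s) f = (∏ i, c i ^ 2) * eval p f := by
  rw [eval_eq', eval_eq', Finset.mul_sum]
  refine Finset.sum_congr rfl fun d hd => ?_
  have hc : ∏ i, c i ^ 2 = ∏ i, (c i ^ d (i, 0) * c i ^ d (i, 1)) :=
    Finset.prod_congr rfl fun i _ => by
      rw [← pow_add, Rv_multidegree hf (mem_support_iff.1 hd) i]
  rw [hc, Fintype.prod_prod_type, Fintype.prod_prod_type]
  simp only [Fin.prod_univ_two, mul_pow, Finset.prod_mul_distrib]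
  ring

lemma eval_bracket (p : Fin 5 × Fin 2 → k) (a b : Fin 5) :
    eval p (bracket k 5 a b) = p (a, 0) * p (b, 1) - p (b, 0) * p (a, 1) := by
  simp [bracket]

/-- An invariant vanishing on all configurations `(P_0, P_1, P_2, q, r)` is zero: if the first
three points are pairwise non-proportional, a matrix in `GL₂(k)` and a rescaling of points
bring them to the base points. -/
lemma eq_zero_of_eval_config [CharZero k] {f : PtRing k 5} (hf : f ∈ Rv k 5 (fun _ => 2))
    (h : ∀ q r, eval (config k q r) f = 0) : f = 0 := by
  set D := bracket k 5 0 1 * bracket k 5 0 2 * bracket k 5 1 2 with hD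
  have hD0 : D ≠ 0 := by
    intro h0
    have := congrArg (eval (config k 0 0)) h0
    simp [hD, eval_bracket, config, basePt] at this
  refine (mul_eq_zero.1 (?_ : f * D = 0)).resolve_right hD0
  refine MvPolynomial.funext fun p => ?_
  rw [map_mul, map_zero, mul_eq_zero, or_iff_not_imp_right]
  intro hDp
  rw [hD, map_mul, map_mul, eval_bracket, eval_bracket, eval_bracket, ← ne_eq, mul_ne_zero_iff,
    mul_ne_zero_iff] at hDp
  obtain ⟨⟨h01, h02⟩, h12⟩ := hDp
  set δ := p (0, 0) * p (1, 1) - p (1, 0) * p (0, 1) with hδ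
  set B := p (0, 0) * p (2, 1) - p (2, 0) * p (0, 1) with hB
  set A := p (1, 0) * p (2, 1) - p (2, 0) * p (1, 1) with hA
  -- Cramer's rule reads `δ p₂ = -A p₀ + B p₁`, so the matrix with rows `-A p₀`, `B p₁` sends the
  -- base points to `-A p₀`, `B p₁`, `δ p₂`; the last two points have explicit preimages.
  have key : actPt !![-A * p (0, 0), -A * p (0, 1); B * p (1, 0), B * p (1, 1)]
      (config k
        ![-(p (3, 0) * p (1, 1) - p (1, 0) * p (3, 1)) / (δ * A),
          (p (0, 0) * p (3, 1) - p (3, 0) * p (0, 1)) / (δ * B)]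
        ![-(p (4, 0) * p (1, 1) - p (1, 0) * p (4, 1)) / (δ * A),
          (p (0, 0) * p (4, 1) - p (4, 0) * p (0, 1)) / (δ * B)])
      = fun s => (![-A, B, δ, 1, 1] : Fin 5 → k) s.1 * p s := by
    funext ⟨i, j⟩
    fin_cases i <;> fin_cases j <;> simp [actPt, config, basePt] <;> field_simp <;>
      simp only [hδ, hA, hB] <;> ring
  have hdet : (!![-A * p (0, 0), -A * p (0, 1); B * p (1, 0), B * p (1, 1)]).det ≠ 0 := by
    have : (!![-A * p (0, 0), -A * p (0, 1); B * p (1, 0), B * p (1, 1)]).det = -(A * B * δ) := by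
      rw [Matrix.det_fin_two_of, hδ]; ring
    rw [this]
    exact neg_ne_zero.2 (mul_ne_zero (mul_ne_zero h12 h02) h01)
  have hz : eval (fun s => (![-A, B, δ, 1, 1] : Fin 5 → k) s.1 * p s) f = 0 := by
    rw [← key]
    exact eval_actPt_GL hf _ hdet _ (h _ _)
  rw [eval_rescale hf] at hz
  refine (mul_eq_zero.1 hz).resolve_left ?_
  simp [Fin.prod_univ_five, h01, h02, h12]

/-! ### Pentagon invariants -/

lemma subst_bracket {n : ℕ} (g : Matrix (Fin 2) (Fin 2) k) (hg : g.det = 1) (a b : Fin n) :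
    subst k n g (bracket k n a b) = bracket k n a b := by
  have h : (C (g 0 0) * C (g 1 1) - C (g 0 1) * C (g 1 0) : PtRing k n) = 1 := by
    rw [← C_mul, ← C_mul, ← C_sub, ← Matrix.det_fin_two, hg, C_1]
  simp only [subst, bracket, map_sub, map_mul, aeval_X, if_true, one_ne_zero, if_false]
  linear_combination (X (a, 0) * X (b, 1) - X (b, 0) * X (a, 1)) * h

lemma bracket_homogeneous {n : ℕ} (a b : Fin n) :
    IsWeightedHomogeneous (fun p : Fin n × Fin 2 => (Finsupp.single p.1 1 : Fin n →₀ ℕ))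
      (bracket k n a b) (Finsupp.single a 1 + Finsupp.single b 1) := by
  have hX := fun s => isWeightedHomogeneous_X k
    (fun p : Fin n × Fin 2 => (Finsupp.single p.1 1 : Fin n →₀ ℕ)) s
  have h1 := (hX (a, 0)).mul (hX (b, 1))
  have h2 := (hX (b, 0)).mul (hX (a, 1))
  rw [add_comm] at h2
  exact Submodule.sub_mem (weightedHomogeneousSubmodule k _ _) h1 h2

/-- The inclusion of the first three indices into all five. -/
def incl : Fin 3 → Fin 5 := Fin.castLE (by norm_num)

/-- The pentagon `[3 σ₁][3 σ₂][4 σ₀][4 σ₂][σ₀ σ₁]` attached to a permutation `σ` of the first three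
indices. It vanishes if point 3 is at `σ₁` or `σ₂`, or point 4 is at `σ₀` or `σ₂`. -/
noncomputable def pentagon (k : Type) [Field k] (σ : Equiv.Perm (Fin 3)) : PtRing k 5 :=
  bracket k 5 3 (incl (σ 1)) * bracket k 5 3 (incl (σ 2)) * bracket k 5 4 (incl (σ 0)) *
    bracket k 5 4 (incl (σ 2)) * bracket k 5 (incl (σ 0)) (incl (σ 1))

lemma pentagon_mem (σ : Equiv.Perm (Fin 3)) : pentagon k σ ∈ Rv k 5 (fun _ => 2) := by
  refine Submodule.mem_inf.2 ⟨(Submodule.mem_iInf _).2 fun g => ?_, ?_⟩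
  · rw [LinearMap.mem_ker, LinearMap.sub_apply, sub_eq_zero]
    simp only [AlgHom.toLinearMap_apply, LinearMap.id_apply, pentagon, map_mul,
      subst_bracket _ g.2]
  · have h := ((((bracket_homogeneous (k := k) 3 (incl (σ 1))).mul
      (bracket_homogeneous 3 (incl (σ 2)))).mul (bracket_homogeneous 4 (incl (σ 0)))).mul
      (bracket_homogeneous 4 (incl (σ 2)))).mul (bracket_homogeneous (incl (σ 0)) (incl (σ 1)))
    rw [mem_weightedHomogeneousSubmodule]
    refine (congrArg (IsWeightedHomogeneous _ _) (Finsupp.ext fun i => ?_)).mp h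
    simp only [Finsupp.add_apply, Finsupp.single_apply, Finsupp.equivFunOnFinite_symm_apply_apply]
    clear h
    revert σ i
    decide

lemma eval_pentagon_eq_zero_iff (σ τ : Equiv.Perm (Fin 3)) :
    eval (config k (basePt k (τ 0)) (basePt k (τ 1))) (pentagon k σ) = 0 ↔ τ ≠ σ := by
  have hb : ∀ i j : Fin 3,
      basePt k i 0 * basePt k j 1 - basePt k j 0 * basePt k i 1 = 0 ↔ i = j := by
    intro i j
    fin_cases i <;> fin_cases j <;> simp [basePt]
  have hc : ∀ (q r : Fin 2 → k) (i : Fin 3) (j : Fin 2),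
      config k q r (incl i, j) = basePt k i j := by
    intro q r i j
    fin_cases i <;> rfl
  have h3 : ∀ (q r : Fin 2 → k) (j : Fin 2), config k q r (3, j) = q j := fun _ _ _ => rfl
  have h4 : ∀ (q r : Fin 2 → k) (j : Fin 2), config k q r (4, j) = r j := fun _ _ _ => rfl
  simp only [pentagon, map_mul, eval_bracket, hc, h3, h4, mul_eq_zero, hb]
  revert σ τ
  decide

/-! ### The dimension count -/

/-- Evaluation at the six configurations `(P_0, P_1, P_2, P_i, P_j)` with `i ≠ j`, the pair being
encoded as `(σ 0, σ 1)` for a permutation `σ`. -/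
noncomputable def evalSix (k : Type) [Field k] :
    ↥(Rv k 5 fun _ => 2) →ₗ[k] (Equiv.Perm (Fin 3) → k) :=
  LinearMap.pi fun σ =>
    (aeval (config k (basePt k (σ 0)) (basePt k (σ 1)))).toLinearMap ∘ₗ Submodule.subtype _

lemma evalSix_apply (f : ↥(Rv k 5 fun _ => 2)) (σ : Equiv.Perm (Fin 3)) :
    evalSix k f σ = eval (config k (basePt k (σ 0)) (basePt k (σ 1))) f.1 := by
  simp [evalSix, MvPolynomial.aeval_eq_eval]

lemma evalSix_injective [CharZero k] : Function.Injective (evalSix k) := by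
  rw [injective_iff_map_eq_zero]
  rintro ⟨f, hf⟩ h
  refine Subtype.ext (eq_zero_of_eval_config hf (eval_config_eq_zero hf fun i j => ?_))
  by_cases hij : i = j
  · rw [hij]
    exact eval_config_diag hf j
  · obtain ⟨σ, rfl, rfl⟩ : ∃ σ : Equiv.Perm (Fin 3), σ 0 = i ∧ σ 1 = j := by
      revert i j
      decide
    rw [← evalSix_apply ⟨f, hf⟩ σ, h, Pi.zero_apply]

lemma evalSix_surjective : Function.Surjective (evalSix k) := by
  intro c
  refine ⟨∑ σ, (c σ * (eval (config k (basePt k (σ 0)) (basePt k (σ 1))) (pentagon k σ))⁻¹) •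
    ⟨pentagon k σ, pentagon_mem σ⟩, ?_⟩
  funext τ
  rw [map_sum, Finset.sum_apply, Finset.sum_eq_single τ]
  · rw [map_smul, Pi.smul_apply, evalSix_apply, smul_eq_mul, inv_mul_cancel_right₀]
    simp [eval_pentagon_eq_zero_iff]
  · intro σ _ hσ
    rw [map_smul, Pi.smul_apply, evalSix_apply, (eval_pentagon_eq_zero_iff σ τ).2 hσ.symm,
      smul_zero]
  · simp

end

/-- For five points, there are no invariants of multidegree `(1,1,1,1,1)`, while the space of
invariants of multidegree `(2,2,2,2,2)` has dimension 6. -/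
theorem stmt12 (k : Type) [Field k] [CharZero k] :
    Rv k 5 (fun _ => 1) = ⊥ ∧ Module.finrank k ↥(Rv k 5 fun _ => 2) = 6 := by
  refine ⟨Rv_one_eq_bot, ?_⟩
  rw [(LinearEquiv.ofBijective (evalSix k) ⟨evalSix_injective, evalSix_surjective⟩).finrank_eq,
    Module.finrank_fintype_fun_eq_card, Fintype.card_perm, Fintype.card_fin]
  rfl
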